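/- arXiv:1304.6250 — 2 statements merged into one kernel-verified Lean document; each statement's English description precedes it below -/
import Mathlib

section
/- Let k be a field, R := MvPowerSeries (Fin 2) k = k[[X,Y]], Ω := Ω¹_{R/k} the Kähler differentials with universal derivation D, m := (X,Y) the maximal ideal of R, and Ω² := ⋀²_R Ω the second exterior power of Ω over R. Then for all f, g ∈ R, the wedge product D f ∧ D g lies in the submodule Span_R{D X ∧ D Y} ⊔ ⋂_{n ≥ 0} mⁿ • Ω² of Ω². (Equivalently: modulo the intersection of the submodules mⁿ·Ω², the module Ω² is generated by dX ∧ dY.) -/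
/-!
The idea is that `D f` agrees with `∂f/∂X • D X + ∂f/∂Y • D Y` up to `⋂ₙ mⁿ • Ω`. Let `δ` be the
difference of the two sides, a `k`-derivation of `R = k[[X, Y]]` that kills `X` and `Y`. Every `f`
can be written `c + X a + Y b` with `c` constant, so `δ f = X • δ a + Y • δ b`; hence the
`R`-submodule `N` spanned by the values of `δ` satisfies `N ≤ m • N`, and therefore
`N ≤ mⁿ • N ≤ mⁿ • Ω` for every `n`.

Wedging with a fixed form is linear, so it carries `⋂ₙ mⁿ • Ω` into `⋂ₙ mⁿ • Ω²`. Bilinear expansion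
of `D f ∧ D g` then leaves, besides such terms, only the Jacobian determinant times `D X ∧ D Y`.
-/

/-- The wedge product of two elements of a module, as an element of the second
exterior power `⋀[R]^2 M`. -/
noncomputable def wedge {R : Type*} [CommRing R] {M : Type*} [AddCommGroup M] [Module R M]
    (a b : M) : ⋀[R]^2 M :=
  ⟨ExteriorAlgebra.ιMulti R 2 ![a, b],
    ExteriorAlgebra.ιMulti_range R 2 (Set.mem_range_self _)⟩

section WedgeAlgebra

variable {R : Type*} [CommRing R] {M : Type*} [AddCommGroup M] [Module R M]

theorem wedge_eq_ιMulti (a b : M) : wedge (R := R) a b = exteriorPower.ιMulti R 2 ![a, b] := rfl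

theorem wedge_add_left (a a' b : M) :
    wedge (R := R) (a + a') b = wedge a b + wedge a' b := by
  simp only [wedge_eq_ιMulti]
  exact (exteriorPower.ιMulti R 2).map_vecCons_add (n := 1) ![b] a a'

theorem wedge_smul_left (r : R) (a b : M) :
    wedge (R := R) (r • a) b = r • wedge a b := by
  simp only [wedge_eq_ιMulti]
  exact (exteriorPower.ιMulti R 2).map_vecCons_smul (n := 1) ![b] r a

theorem wedge_self (a : M) : wedge (R := R) a a = 0 := by
  rw [wedge_eq_ιMulti]
  exact (exteriorPower.ιMulti R 2).map_eq_zero_of_eq ![a, a] (i := 0) (j := 1) rfl (by decide)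

theorem wedge_swap (a b : M) : wedge (R := R) a b = -wedge b a := by
  rw [wedge_eq_ιMulti, wedge_eq_ιMulti,
    ← (exteriorPower.ιMulti R 2).map_swap ![b, a] (i := 0) (j := 1) (by decide)]
  congr 1
  ext i
  fin_cases i <;> rfl

theorem wedge_add_right (a b b' : M) :
    wedge (R := R) a (b + b') = wedge a b + wedge a b' := by
  rw [wedge_swap, wedge_add_left, neg_add, ← wedge_swap, ← wedge_swap]

theorem wedge_smul_right (r : R) (a b : M) :
    wedge (R := R) a (r • b) = r • wedge a b := by
  rw [wedge_swap, wedge_smul_left, wedge_swap a b, smul_neg]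

theorem wedge_mem_smul_top_left (I : Ideal R) {a : M} (b : M)
    (ha : a ∈ I • (⊤ : Submodule R M)) :
    wedge (R := R) a b ∈ I • (⊤ : Submodule R (⋀[R]^2 M)) := by
  let L : M →ₗ[R] ⋀[R]^2 M :=
    { toFun := fun x => wedge x b
      map_add' := fun x y => wedge_add_left x y b
      map_smul' := fun r x => wedge_smul_left r x b }
  have h := Submodule.mem_map_of_mem (f := L) ha
  rw [Submodule.map_smul''] at h
  exact Submodule.smul_mono le_rfl le_top h

theorem wedge_mem_smul_top_right (I : Ideal R) (a : M) {b : M}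
    (hb : b ∈ I • (⊤ : Submodule R M)) :
    wedge (R := R) a b ∈ I • (⊤ : Submodule R (⋀[R]^2 M)) := by
  rw [wedge_swap]
  exact neg_mem (wedge_mem_smul_top_left I a hb)

theorem wedge_combination (p q r s : R) (x y : M) :
    wedge (R := R) (p • x + q • y) (r • x + s • y) = (p * s - q * r) • wedge x y := by
  simp only [wedge_add_left, wedge_add_right, wedge_smul_left, wedge_smul_right, wedge_self,
    wedge_swap y x]
  module

end WedgeAlgebra

section PowerSeries

variable {k : Type*} [Field k]

theorem exists_eq_C_add_X_mul_add_X_mul (f : MvPowerSeries (Fin 2) k) :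
    ∃ (c : k) (a b : MvPowerSeries (Fin 2) k),
      f = MvPowerSeries.C c + MvPowerSeries.X 0 * a + MvPowerSeries.X 1 * b := by
  classical
  -- `b` collects the coefficients of all monomials divisible by `Y`
  let b : MvPowerSeries (Fin 2) k := fun d => MvPowerSeries.coeff (d + Finsupp.single 1 1) f
  have hb : ∀ d, MvPowerSeries.coeff d b = MvPowerSeries.coeff (d + Finsupp.single 1 1) f :=
    fun _ => rfl
  have hdvd : MvPowerSeries.X (0 : Fin 2) ∣
      f - MvPowerSeries.C (MvPowerSeries.constantCoeff f) - MvPowerSeries.X 1 * b := by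
    rw [MvPowerSeries.X_dvd_iff]
    intro d hd
    by_cases h1 : d 1 = 0
    · have h0 : d = 0 := by
        ext i
        fin_cases i
        · exact hd
        · exact h1
      subst h0
      simp
    · obtain ⟨e, rfl⟩ : ∃ e, d = e + Finsupp.single 1 1 := by
        refine ⟨d - Finsupp.single 1 1, (tsub_add_cancel_of_le ?_).symm⟩
        rw [Finsupp.single_le_iff]
        omega
      have hne : e + Finsupp.single 1 1 ≠ 0 := fun h => h1 (by rw [h]; rfl)
      rw [map_sub, map_sub, MvPowerSeries.coeff_C, if_neg hne, mul_comm, MvPowerSeries.X,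
        MvPowerSeries.coeff_add_mul_monomial, hb]
      ring
  obtain ⟨a, ha⟩ := hdvd
  exact ⟨_, a, b, by rw [← ha]; ring⟩

/-- A `k`-derivation of `k[[X, Y]]` that kills `X` and `Y` takes values in `⋂ₙ mⁿ • M`. It need not
vanish, since `M` is not assumed to be `m`-adically separated. -/
theorem derivation_mem_pow_smul_top {M : Type*} [AddCommGroup M]
    [Module (MvPowerSeries (Fin 2) k) M] [Module k M]
    (δ : Derivation k (MvPowerSeries (Fin 2) k) M)
    (h0 : δ (MvPowerSeries.X 0) = 0) (h1 : δ (MvPowerSeries.X 1) = 0)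
    (n : ℕ) (f : MvPowerSeries (Fin 2) k) :
    δ f ∈ (Ideal.span {MvPowerSeries.X (0 : Fin 2), MvPowerSeries.X (1 : Fin 2)} :
      Ideal (MvPowerSeries (Fin 2) k)) ^ n • (⊤ : Submodule (MvPowerSeries (Fin 2) k) M) := by
  induction n generalizing f with
  | zero => simp
  | succ n ih =>
    obtain ⟨c, a, b, rfl⟩ := exists_eq_C_add_X_mul_add_X_mul f
    have hc : δ (MvPowerSeries.C c) = 0 := δ.map_algebraMap c
    rw [map_add, map_add, hc, δ.leibniz, δ.leibniz, h0, h1, smul_zero, smul_zero, add_zero,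
      add_zero, zero_add, pow_succ', Submodule.mul_smul]
    exact add_mem
      (Submodule.smul_mem_smul (Ideal.subset_span (by simp)) (ih a))
      (Submodule.smul_mem_smul (Ideal.subset_span (by simp)) (ih b))

/-- The total differential formula holds up to `⋂ₙ mⁿ • Ω`; the coefficients `p`, `q` are the partial
derivatives of `f`. -/
theorem exists_D_eq_combination_add (f : MvPowerSeries (Fin 2) k) :
    ∃ (p q : MvPowerSeries (Fin 2) k) (ε : KaehlerDifferential k (MvPowerSeries (Fin 2) k)),
      (∀ n : ℕ, ε ∈
        (Ideal.span {MvPowerSeries.X (0 : Fin 2), MvPowerSeries.X (1 : Fin 2)} :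
          Ideal (MvPowerSeries (Fin 2) k)) ^ n •
            (⊤ : Submodule (MvPowerSeries (Fin 2) k)
              (KaehlerDifferential k (MvPowerSeries (Fin 2) k)))) ∧
      KaehlerDifferential.D k (MvPowerSeries (Fin 2) k) f =
        (p • KaehlerDifferential.D k (MvPowerSeries (Fin 2) k) (MvPowerSeries.X 0) +
          q • KaehlerDifferential.D k (MvPowerSeries (Fin 2) k) (MvPowerSeries.X 1)) + ε := by
  set D := KaehlerDifferential.D k (MvPowerSeries (Fin 2) k)
  let δ : Derivation k (MvPowerSeries (Fin 2) k)
      (KaehlerDifferential k (MvPowerSeries (Fin 2) k)) :=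
    D - (LinearMap.toSpanSingleton (MvPowerSeries (Fin 2) k) _
          (D (MvPowerSeries.X 0))).compDer (MvPowerSeries.pderiv k 0)
      - (LinearMap.toSpanSingleton (MvPowerSeries (Fin 2) k) _
          (D (MvPowerSeries.X 1))).compDer (MvPowerSeries.pderiv k 1)
  have hδ : ∀ g, δ g = D g - MvPowerSeries.pderiv k 0 g • D (MvPowerSeries.X 0)
      - MvPowerSeries.pderiv k 1 g • D (MvPowerSeries.X 1) := fun _ => rfl
  refine ⟨MvPowerSeries.pderiv k 0 f, MvPowerSeries.pderiv k 1 f, δ f,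
    fun n => derivation_mem_pow_smul_top δ ?_ ?_ n f, ?_⟩
  · simp [hδ]
  · simp [hδ]
  · rw [hδ]
    abel

end PowerSeries

/-- Modulo the intersection of the submodules `mⁿ · Ω²`, the second exterior power
`Ω² = ⋀² Ω¹_{k[[X,Y]]/k}` is generated by `dX ∧ dY`: for all `f, g`, the wedge
`df ∧ dg` lies in the span of `dX ∧ dY` together with `⋂ₙ mⁿ · Ω²`. -/
theorem exteriorPower_kaehlerDifferential_mvPowerSeries_generated
    (k : Type*) [Field k] (f g : MvPowerSeries (Fin 2) k) :
    wedge (KaehlerDifferential.D k (MvPowerSeries (Fin 2) k) f)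
        (KaehlerDifferential.D k (MvPowerSeries (Fin 2) k) g) ∈
      Submodule.span (MvPowerSeries (Fin 2) k)
          {wedge (KaehlerDifferential.D k (MvPowerSeries (Fin 2) k) (MvPowerSeries.X (0 : Fin 2)))
            (KaehlerDifferential.D k (MvPowerSeries (Fin 2) k) (MvPowerSeries.X (1 : Fin 2)))} ⊔
        ⨅ n : ℕ,
          ((Ideal.span {MvPowerSeries.X (0 : Fin 2), MvPowerSeries.X (1 : Fin 2)} :
              Ideal (MvPowerSeries (Fin 2) k)) ^ n) •
            (⊤ : Submodule (MvPowerSeries (Fin 2) k)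
              (⋀[MvPowerSeries (Fin 2) k]^2
                (KaehlerDifferential k (MvPowerSeries (Fin 2) k)))) := by
  obtain ⟨p, q, ε, hε, hf⟩ := exists_D_eq_combination_add f
  obtain ⟨r, s, η, hη, hg⟩ := exists_D_eq_combination_add g
  rw [hf, wedge_add_left, hg, wedge_add_right, wedge_combination, add_assoc]
  refine Submodule.add_mem_sup
    (Submodule.smul_mem _ _ (Submodule.mem_span_singleton_self _))
    ((Submodule.mem_iInf _).2 fun n => add_mem ?_ ?_)
  · exact wedge_mem_smul_top_right _ _ (hη n)
  · exact wedge_mem_smul_top_left _ _ (hε n)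
end

section
/- Let K be a field and F := K((t₁))((t₂)). The higher tame symbol is multiplicative in each argument: for all nonzero f, f', g, g', h, h' ∈ F, T(f·f', g, h) = T(f,g,h) · T(f',g,h), T(f, g·g', h) = T(f,g,h) · T(f,g',h), and T(f, g, h·h') = T(f,g,h) · T(f,g,h'). -/
/-!
Write `E(f, g, h) ∈ F` for the element whose constant coefficient is the symbol. The sign exponent
`α` is trilinear in the pairs `(v₂, v₁)` and each exponent `b_f`, `b_g`, `b_h` is bilinear in the
other two arguments, so, since `v₂` and `v₁` are additive on `F \ {0}`, the element `E` is
multiplicative in each argument (`symbolElt_mul_left` and its companions).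

It remains to see that taking the constant coefficient is multiplicative on these elements.
Expanding a 3 × 3 determinant with a repeated row shows `v₂ (E(f, g, h)) = v₁ (E(f, g, h)) = 0`,
so the constant coefficient of `E(f, g, h)` is its iterated leading coefficient
(`tameSymbol_eq_leadingCoeff`), and leading coefficients are multiplicative over a field.
-/


/-- The outer order `v₂` of an iterated Laurent series. -/
noncomputable def v2 {K : Type*} [Field K] (f : LaurentSeries (LaurentSeries K)) : ℤ :=
  f.order

/-- The inner order `v₁` of an iterated Laurent series: the order (in `t₁`) of the
leading coefficient (in `t₂`). -/
noncomputable def v1 {K : Type*} [Field K] (f : LaurentSeries (LaurentSeries K)) : ℤ :=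
  (f.coeff f.order).order

/-- The higher tame symbol of Parshin with the Fesenko–Vostokov sign. -/
noncomputable def tameSymbol {K : Type*} [Field K]
    (f g h : LaurentSeries (LaurentSeries K)) : K :=
  ((((-1 : LaurentSeries (LaurentSeries K)) ^
        (v2 f * v2 g * v1 h + v2 f * v2 h * v1 g + v2 g * v2 h * v1 f +
          v2 f * v1 g * v1 h + v2 g * v1 f * v1 h + v2 h * v1 f * v1 g) *
      f ^ (v2 g * v1 h - v2 h * v1 g) *
      g ^ (-(v2 f * v1 h - v2 h * v1 f)) *
      h ^ (v2 f * v1 g - v2 g * v1 f)).coeff 0).coeff 0)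

/-- The constant embedding `K → K((t₁))((t₂))`. -/
noncomputable def constF {K : Type*} [Field K] (c : K) : LaurentSeries (LaurentSeries K) :=
  HahnSeries.C (HahnSeries.C c)

/-- The inner uniformizer `t₁` viewed as an element of `K((t₁))((t₂))`. -/
noncomputable def tau1 (K : Type*) [Field K] : LaurentSeries (LaurentSeries K) :=
  HahnSeries.C (HahnSeries.single (1 : ℤ) (1 : K))

/-- The outer uniformizer `t₂` of `K((t₁))((t₂))`. -/
noncomputable def tau2 (K : Type*) [Field K] : LaurentSeries (LaurentSeries K) :=
  HahnSeries.single (1 : ℤ) (1 : LaurentSeries K)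

section Helpers

variable {K : Type*} [Field K]

theorem v1_eq (f : LaurentSeries (LaurentSeries K)) : v1 f = f.leadingCoeff.order := by
  rw [HahnSeries.leadingCoeff_eq]; rfl

theorem v2_mul {f g : LaurentSeries (LaurentSeries K)} (hf : f ≠ 0) (hg : g ≠ 0) :
    v2 (f * g) = v2 f + v2 g :=
  HahnSeries.order_mul hf hg

theorem v1_mul {f g : LaurentSeries (LaurentSeries K)} (hf : f ≠ 0) (hg : g ≠ 0) :
    v1 (f * g) = v1 f + v1 g := by
  rw [v1_eq, v1_eq, v1_eq, HahnSeries.leadingCoeff_mul]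
  exact HahnSeries.order_mul (HahnSeries.leadingCoeff_ne_zero.2 hf)
    (HahnSeries.leadingCoeff_ne_zero.2 hg)

/-- A function on nonzero elements of a field that turns products into sums turns integer powers
into multiples; it is used for both `v2` and `v1`. -/
theorem map_zpow_of_map_mul {F : Type*} [Field F] (v : F → ℤ)
    (hv : ∀ {a b : F}, a ≠ 0 → b ≠ 0 → v (a * b) = v a + v b) {f : F} (hf : f ≠ 0) (n : ℤ) :
    v (f ^ n) = n * v f := by
  let φ : Fˣ →* Multiplicative ℤ := MonoidHom.mk' (fun u => Multiplicative.ofAdd (v u))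
    (fun a b => congrArg Multiplicative.ofAdd (hv a.ne_zero b.ne_zero))
  have h := congrArg Multiplicative.toAdd (map_zpow φ (Units.mk0 f hf) n)
  simpa [φ] using h

theorem map_neg_one_of_map_mul {F : Type*} [Field F] (v : F → ℤ)
    (hv : ∀ {a b : F}, a ≠ 0 → b ≠ 0 → v (a * b) = v a + v b) : v (-1) = 0 := by
  have h1 := hv (one_ne_zero (α := F)) one_ne_zero
  have h2 := hv (neg_ne_zero.2 (one_ne_zero (α := F))) (neg_ne_zero.2 one_ne_zero)
  simp only [mul_one, mul_neg, neg_neg] at h1 h2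
  omega

/-- The element of `K((t₁))((t₂))` whose constant coefficient is the higher tame symbol. -/
noncomputable def symbolElt (f g h : LaurentSeries (LaurentSeries K)) :
    LaurentSeries (LaurentSeries K) :=
  (-1 : LaurentSeries (LaurentSeries K)) ^
      (v2 f * v2 g * v1 h + v2 f * v2 h * v1 g + v2 g * v2 h * v1 f +
        v2 f * v1 g * v1 h + v2 g * v1 f * v1 h + v2 h * v1 f * v1 g) *
    f ^ (v2 g * v1 h - v2 h * v1 g) *
    g ^ (-(v2 f * v1 h - v2 h * v1 f)) *
    h ^ (v2 f * v1 g - v2 g * v1 f)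

/-- An additive function on nonzero elements sees `symbolElt f g h` as the determinant with rows
`v`, `v2`, `v1` evaluated at `f`, `g`, `h`. -/
theorem map_symbolElt (v : LaurentSeries (LaurentSeries K) → ℤ)
    (hv : ∀ {a b}, a ≠ 0 → b ≠ 0 → v (a * b) = v a + v b)
    {f g h : LaurentSeries (LaurentSeries K)} (hf : f ≠ 0) (hg : g ≠ 0) (hh : h ≠ 0) :
    v (symbolElt f g h) = v f * (v2 g * v1 h - v2 h * v1 g) -
      v g * (v2 f * v1 h - v2 h * v1 f) + v h * (v2 f * v1 g - v2 g * v1 f) := by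
  have h1 : (-1 : LaurentSeries (LaurentSeries K)) ≠ 0 := neg_ne_zero.2 one_ne_zero
  rw [symbolElt, hv, hv, hv, map_zpow_of_map_mul v hv h1, map_zpow_of_map_mul v hv hf,
    map_zpow_of_map_mul v hv hg, map_zpow_of_map_mul v hv hh, map_neg_one_of_map_mul v hv]
  · ring
  all_goals
    simp only [ne_eq, mul_eq_zero, not_or]
    simp only [← ne_eq]
    simp only [zpow_ne_zero _ h1, zpow_ne_zero _ hf, zpow_ne_zero _ hg, zpow_ne_zero _ hh,
      ne_eq, not_false_eq_true, and_self]

theorem tameSymbol_eq_leadingCoeff {f g h : LaurentSeries (LaurentSeries K)}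
    (hf : f ≠ 0) (hg : g ≠ 0) (hh : h ≠ 0) :
    tameSymbol f g h = (symbolElt f g h).leadingCoeff.leadingCoeff := by
  have e2 : (symbolElt f g h).order = 0 := by
    change v2 _ = 0
    rw [map_symbolElt v2 v2_mul hf hg hh]
    ring
  have e1 : (symbolElt f g h).leadingCoeff.order = 0 := by
    rw [← v1_eq, map_symbolElt v1 v1_mul hf hg hh]
    ring
  rw [HahnSeries.leadingCoeff_eq, e1, HahnSeries.leadingCoeff_eq, e2]
  rfl

theorem mul_four_eq {M : Type*} [CommMonoid M] {a a₁ a₂ b b₁ b₂ c c₁ c₂ d d₁ d₂ : M}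
    (ha : a = a₁ * a₂) (hb : b = b₁ * b₂) (hc : c = c₁ * c₂) (hd : d = d₁ * d₂) :
    a * b * c * d = a₁ * b₁ * c₁ * d₁ * (a₂ * b₂ * c₂ * d₂) := by
  rw [ha, hb, hc, hd, mul_mul_mul_comm a₁, mul_mul_mul_comm (a₁ * b₁),
    mul_mul_mul_comm (a₁ * b₁ * c₁)]

theorem zpow_eq_mul {F : Type*} [Field F] {x : F} (hx : x ≠ 0) {m m₁ m₂ : ℤ}
    (hm : m = m₁ + m₂) : x ^ m = x ^ m₁ * x ^ m₂ := by
  rw [hm, zpow_add₀ hx]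

theorem symbolElt_mul_left {f f' g h : LaurentSeries (LaurentSeries K)}
    (hf : f ≠ 0) (hf' : f' ≠ 0) (hg : g ≠ 0) (hh : h ≠ 0) :
    symbolElt (f * f') g h = symbolElt f g h * symbolElt f' g h := by
  unfold symbolElt
  rw [v2_mul hf hf', v1_mul hf hf']
  refine mul_four_eq (zpow_eq_mul (neg_ne_zero.2 one_ne_zero) ?_)
    (mul_zpow _ _ _) (zpow_eq_mul hg ?_) (zpow_eq_mul hh ?_) <;> ring

theorem symbolElt_mul_mid {f g g' h : LaurentSeries (LaurentSeries K)}
    (hf : f ≠ 0) (hg : g ≠ 0) (hg' : g' ≠ 0) (hh : h ≠ 0) :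
    symbolElt f (g * g') h = symbolElt f g h * symbolElt f g' h := by
  unfold symbolElt
  rw [v2_mul hg hg', v1_mul hg hg']
  refine mul_four_eq (zpow_eq_mul (neg_ne_zero.2 one_ne_zero) ?_)
    (zpow_eq_mul hf ?_) (mul_zpow _ _ _) (zpow_eq_mul hh ?_) <;> ring

theorem symbolElt_mul_right {f g h h' : LaurentSeries (LaurentSeries K)}
    (hf : f ≠ 0) (hg : g ≠ 0) (hh : h ≠ 0) (hh' : h' ≠ 0) :
    symbolElt f g (h * h') = symbolElt f g h * symbolElt f g h' := by
  unfold symbolElt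
  rw [v2_mul hh hh', v1_mul hh hh']
  refine mul_four_eq (zpow_eq_mul (neg_ne_zero.2 one_ne_zero) ?_)
    (zpow_eq_mul hf ?_) (zpow_eq_mul hg ?_) (mul_zpow _ _ _) <;> ring

end Helpers

/-- The higher tame symbol is multiplicative in each of its three arguments. -/
theorem tameSymbol_multiplicative {K : Type*} [Field K]
    (f f' g g' h h' : LaurentSeries (LaurentSeries K))
    (hf : f ≠ 0) (hf' : f' ≠ 0) (hg : g ≠ 0) (hg' : g' ≠ 0) (hh : h ≠ 0) (hh' : h' ≠ 0) :
    tameSymbol (f * f') g h = tameSymbol f g h * tameSymbol f' g h ∧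
    tameSymbol f (g * g') h = tameSymbol f g h * tameSymbol f g' h ∧
    tameSymbol f g (h * h') = tameSymbol f g h * tameSymbol f g h' := by
  refine ⟨?_, ?_, ?_⟩
  · rw [tameSymbol_eq_leadingCoeff (mul_ne_zero hf hf') hg hh, tameSymbol_eq_leadingCoeff hf hg hh,
      tameSymbol_eq_leadingCoeff hf' hg hh, symbolElt_mul_left hf hf' hg hh,
      HahnSeries.leadingCoeff_mul, HahnSeries.leadingCoeff_mul]
  · rw [tameSymbol_eq_leadingCoeff hf (mul_ne_zero hg hg') hh, tameSymbol_eq_leadingCoeff hf hg hh,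
      tameSymbol_eq_leadingCoeff hf hg' hh, symbolElt_mul_mid hf hg hg' hh,
      HahnSeries.leadingCoeff_mul, HahnSeries.leadingCoeff_mul]
  · rw [tameSymbol_eq_leadingCoeff hf hg (mul_ne_zero hh hh'), tameSymbol_eq_leadingCoeff hf hg hh,
      tameSymbol_eq_leadingCoeff hf hg hh', symbolElt_mul_right hf hg hh hh',
      HahnSeries.leadingCoeff_mul, HahnSeries.leadingCoeff_mul]
end
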